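/- Suppose p ∈ ℝ[x₁,…,xₙ] is a convex cover polynomial and F₁,…,F_u are pairwise disjoint faces of New(p) with Support(p) ⊆ F₁ ∪ … ∪ F_u. Let pᵢ = Proj(p, Fᵢ) for i = 1,…,u. Then p is SOS if and only if pᵢ is SOS for every i = 1,…,u. -/

import Mathlib

open MvPolynomial
open scoped Classical

noncomputable section

/-- Embed an exponent vector `a ∈ ℕⁿ` into `ℝⁿ`. -/
def toR {n : ℕ} (a : Fin n →₀ ℕ) : Fin n → ℝ := fun i => (a i : ℝ)

/-- `p` is a sum of squares of polynomials. -/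
def IsSOS {n : ℕ} (p : MvPolynomial (Fin n) ℝ) : Prop :=
  ∃ (s : ℕ) (q : Fin s → MvPolynomial (Fin n) ℝ), p = ∑ i, (q i) ^ 2

/-- `Proj(p,T)` for `T ⊆ ℝⁿ`: delete every term of `p` whose exponent vector is not in `T`. -/
def projR {n : ℕ} (p : MvPolynomial (Fin n) ℝ) (T : Set (Fin n → ℝ)) :
    MvPolynomial (Fin n) ℝ :=
  ∑ a ∈ p.support, if toR a ∈ T then monomial a (p.coeff a) else 0

/-- `Proj(p,T)` for `T ⊆ ℕⁿ`. -/
def projN {n : ℕ} (p : MvPolynomial (Fin n) ℝ) (T : Set (Fin n →₀ ℕ)) :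
    MvPolynomial (Fin n) ℝ :=
  ∑ a ∈ p.support, if a ∈ T then monomial a (p.coeff a) else 0

/-- The Newton polytope of `p`: convex hull of its support in `ℝⁿ`. -/
def newton {n : ℕ} (p : MvPolynomial (Fin n) ℝ) : Set (Fin n → ℝ) :=
  convexHull ℝ (toR '' ↑p.support)

/-- `F` is an (exposed) face of `N`: `F ⊆ N`, and either `F = N` or there is an
affine function vanishing on `F` and strictly positive on `N \ F`. -/
def IsFace {n : ℕ} (N F : Set (Fin n → ℝ)) : Prop :=
  F ⊆ N ∧ (F = N ∨ ∃ π : (Fin n → ℝ) →ᵃ[ℝ] ℝ,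
    (∀ x ∈ F, π x = 0) ∧ ∀ x ∈ N \ F, 0 < π x)

/-- `SOSS(p,G)`: whenever `p` is SOS, it has an SOS decomposition all of whose
summands have support contained in `G`. -/
def SOSS {n : ℕ} (p : MvPolynomial (Fin n) ℝ) (G : Finset (Fin n →₀ ℕ)) : Prop :=
  IsSOS p → ∃ (s : ℕ) (q : Fin s → MvPolynomial (Fin n) ℝ),
    p = ∑ i, (q i) ^ 2 ∧ ∀ i, (q i).support ⊆ G

/-- `V(p,G)`: elements `a ∈ G` whose double has the unique decomposition `a + a` in `G + G`. -/
def VSet {n : ℕ} (G : Finset (Fin n →₀ ℕ)) : Set (Fin n →₀ ℕ) :=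
  {a | a ∈ G ∧ ∀ b ∈ G, ∀ r ∈ G, b + r = a + a → b = a ∧ r = a}

/-- Membership in `Relat(a)` (least fixed point of the recursive definition):
`Relat(a) = {a/2}` if the unique decomposition of `a` in `G + G` is `a/2 + a/2`;
otherwise `Relat(a)` is the union of `Relat(2b) ∪ Relat(2r)` over decompositions
`a = b + r` with `b ≠ r`, `b, r ∈ G`; and `Relat(a) = ∅` if `a ∉ G + G`. -/
inductive RelatMem {n : ℕ} (G : Finset (Fin n →₀ ℕ)) :
    (Fin n →₀ ℕ) → (Fin n →₀ ℕ) → Prop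
  | base (a c : Fin n →₀ ℕ) (hc : c ∈ G) (hcc : c + c = a)
      (huniq : ∀ b ∈ G, ∀ r ∈ G, b + r = a → b = c) : RelatMem G a c
  | stepL (a b r v : Fin n →₀ ℕ) (hb : b ∈ G) (hr : r ∈ G) (hne : b ≠ r)
      (hbr : b + r = a) (hv : RelatMem G (b + b) v) : RelatMem G a v
  | stepR (a b r v : Fin n →₀ ℕ) (hb : b ∈ G) (hr : r ∈ G) (hne : b ≠ r)
      (hbr : b + r = a) (hv : RelatMem G (r + r) v) : RelatMem G a v

/-- `Relat(a)` as a set. -/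
def Relat {n : ℕ} (G : Finset (Fin n →₀ ℕ)) (a : Fin n →₀ ℕ) : Set (Fin n →₀ ℕ) :=
  {v | RelatMem G a v}

/-- `σ(T) = {r ∈ G : Relat(2r) ⊆ T}`. -/
def sigmaSet {n : ℕ} (G : Finset (Fin n →₀ ℕ)) (T : Set (Fin n →₀ ℕ)) :
    Set (Fin n →₀ ℕ) :=
  {r | r ∈ G ∧ Relat G (r + r) ⊆ T}

/-- `p` is a split polynomial with respect to `T₁, …, T_u ⊆ V(p,G)`. -/
def IsSplit {n : ℕ} (p : MvPolynomial (Fin n) ℝ) (G : Finset (Fin n →₀ ℕ))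
    (u : ℕ) (T : Fin u → Set (Fin n →₀ ℕ)) : Prop :=
  SOSS p G ∧ (∀ i, T i ⊆ VSet G) ∧ (∀ i, (T i).Nonempty) ∧
  (∀ i j, i ≠ j → Disjoint (T i) (T j)) ∧
  (∀ i, ∀ a ∈ sigmaSet G (T i), ∀ b ∈ sigmaSet G (T i), Relat G (a + b) ⊆ T i) ∧
  ∀ a ∈ p.support, ∃! i, Relat G a ⊆ T i

/-- The sub-polynomial `Σ_{a ∈ Support(p), Relat(a) ⊆ T} c_a x^a` of `p`. -/
def projRelat {n : ℕ} (p : MvPolynomial (Fin n) ℝ) (G : Finset (Fin n →₀ ℕ))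
    (T : Set (Fin n →₀ ℕ)) : MvPolynomial (Fin n) ℝ :=
  ∑ a ∈ p.support, if Relat G a ⊆ T then monomial a (p.coeff a) else 0

/-- `p` is a convex cover polynomial: some pairwise disjoint faces of `New(p)`
cover `Support(p)`. -/
def IsConvexCover {n : ℕ} (p : MvPolynomial (Fin n) ℝ) : Prop :=
  ∃ (u : ℕ) (F : Fin u → Set (Fin n → ℝ)),
    (∀ i, IsFace (newton p) (F i)) ∧
    (∀ i j, i ≠ j → Disjoint (F i) (F j)) ∧
    toR '' ↑p.support ⊆ ⋃ i, F i

end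

lemma wcomp_sq {n : ℕ} (w : Fin n → ℝ) (q : MvPolynomial (Fin n) ℝ) (t : ℝ)
    (h : ∀ b ∈ q.support, t ≤ Finsupp.weight w b) :
    weightedHomogeneousComponent w (2 * t) (q ^ 2) =
      (weightedHomogeneousComponent w t q) ^ 2 := by
  ext a
  rw [coeff_weightedHomogeneousComponent, pow_two, pow_two, coeff_mul, coeff_mul]
  simp only [coeff_weightedHomogeneousComponent]
  have h' : ∀ b, Finsupp.weight w b < t → coeff b q = 0 := by
    intro b hb
    by_contra hc
    have := h b (mem_support_iff.2 hc)
    linarith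
  split_ifs with ha
  · refine Finset.sum_congr rfl fun x hx => ?_
    have hx' : x.1 + x.2 = a := Finset.HasAntidiagonal.mem_antidiagonal.1 hx
    have hw : Finsupp.weight w x.1 + Finsupp.weight w x.2 = 2 * t := by
      rw [← map_add, hx', ha]
    rcases lt_trichotomy (Finsupp.weight w x.1) t with h1 | h1 | h1
    · simp [h' _ h1]
    · have h2 : Finsupp.weight w x.2 = t := by linarith
      simp [h1, h2]
    · have h2 : Finsupp.weight w x.2 < t := by linarith
      simp [h' _ h2]
  · symm
    refine Finset.sum_eq_zero fun x hx => ?_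
    have hx' : x.1 + x.2 = a := Finset.HasAntidiagonal.mem_antidiagonal.1 hx
    have hw : Finsupp.weight w x.1 + Finsupp.weight w x.2 = Finsupp.weight w a := by
      rw [← map_add, hx']
    split_ifs with h1 h2
    · exact absurd (by linarith) ha
    all_goals simp

lemma sum_sq_zero {n s : ℕ} (q : Fin s → MvPolynomial (Fin n) ℝ)
    (h : ∑ i, (q i) ^ 2 = 0) (i : Fin s) : q i = 0 := by
  apply MvPolynomial.funext
  intro x
  have h1 := congrArg (eval x) h
  simp only [map_sum, map_pow, map_zero] at h1
  rw [Finset.sum_eq_zero_iff_of_nonneg (fun i _ => sq_nonneg _)] at h1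
  have := h1 i (Finset.mem_univ i)
  simpa using this

lemma coeff_projR {n : ℕ} (p : MvPolynomial (Fin n) ℝ) (T : Set (Fin n → ℝ))
    (a : Fin n →₀ ℕ) :
    coeff a (projR p T) = if toR a ∈ T then coeff a p else 0 := by
  have : ∀ b ∈ p.support, coeff a (if toR b ∈ T then monomial b (p.coeff b) else 0) =
      if b = a then (if toR a ∈ T then coeff a p else 0) else 0 := by
    intro b _
    by_cases hba : b = a
    · subst hba
      by_cases hT : toR b ∈ T <;> simp [hT]
    · by_cases hT : toR b ∈ T <;> simp [hT, hba, coeff_monomial]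
  rw [projR, coeff_sum, Finset.sum_congr rfl this, Finset.sum_ite_eq']
  by_cases ha : a ∈ p.support
  · rw [if_pos ha]
  · rw [if_neg ha, notMem_support_iff.1 ha, ite_self]

lemma wcomp_sos {n : ℕ} (w : Fin n → ℝ) (p : MvPolynomial (Fin n) ℝ) (t : ℝ)
    (hp : IsSOS p) (h : ∀ b ∈ p.support, 2 * t ≤ Finsupp.weight w b) :
    IsSOS (weightedHomogeneousComponent w (2 * t) p) := by
  obtain ⟨s, q, hq⟩ := hp
  have key : ∀ i, ∀ b ∈ (q i).support, t ≤ Finsupp.weight w b := by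
    by_contra! hc
    obtain ⟨i, b, hb, hbt⟩ := hc
    obtain ⟨b0, hb0, hmin⟩ := Finset.exists_min_image
      (Finset.univ.biUnion fun i => (q i).support) (fun b => Finsupp.weight w b)
      ⟨b, Finset.mem_biUnion.2 ⟨i, Finset.mem_univ i, hb⟩⟩
    obtain ⟨j, _, hj⟩ := Finset.mem_biUnion.1 hb0
    set m := Finsupp.weight w b0 with hm
    have hmt : m < t :=
      lt_of_le_of_lt (hmin b (Finset.mem_biUnion.2 ⟨i, Finset.mem_univ i, hb⟩)) hbt
    have e1 : weightedHomogeneousComponent w (2 * m) p =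
        ∑ i, (weightedHomogeneousComponent w m (q i)) ^ 2 := by
      rw [hq, map_sum]
      exact Finset.sum_congr rfl fun k _ => wcomp_sq w (q k) m fun c hc =>
        hmin c (Finset.mem_biUnion.2 ⟨k, Finset.mem_univ k, hc⟩)
    have e2 : weightedHomogeneousComponent w (2 * m) p = 0 := by
      ext a
      rw [coeff_weightedHomogeneousComponent, coeff_zero]
      split_ifs with ha
      · by_contra hne
        have := h a (mem_support_iff.2 hne)
        linarith
      · rfl
    have e3 := sum_sq_zero _ (e1.symm.trans e2) j
    have e4 := congrArg (coeff b0) e3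
    rw [coeff_weightedHomogeneousComponent, if_pos hm.symm, coeff_zero] at e4
    exact (mem_support_iff.1 hj) e4
  refine ⟨s, fun i => weightedHomogeneousComponent w t (q i), ?_⟩
  rw [hq, map_sum]
  exact Finset.sum_congr rfl fun k _ => wcomp_sq w (q k) t (key k)

lemma affine_weight {n : ℕ} (π : (Fin n → ℝ) →ᵃ[ℝ] ℝ) (a : Fin n →₀ ℕ) :
    π (toR a) = Finsupp.weight (fun i => π.linear (Pi.single i 1)) a + π 0 := by
  have h1 : π (toR a) = π.linear (toR a) + π 0 := by
    have := π.map_vadd 0 (toR a)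
    simpa using this
  rw [h1]
  congr 1
  rw [Finsupp.weight_apply, Finsupp.sum_fintype _ _ (by simp)]
  conv_lhs => rw [LinearMap.pi_apply_eq_sum_univ π.linear (toR a)]
  refine Finset.sum_congr rfl fun i _ => ?_
  have : (fun j => if i = j then (1:ℝ) else 0) = Pi.single i 1 := by
    ext j
    simp [Pi.single_apply, eq_comm]
  simp [toR, this]

lemma IsSOS.add {n : ℕ} {p q : MvPolynomial (Fin n) ℝ} (hp : IsSOS p) (hq : IsSOS q) :
    IsSOS (p + q) := by
  obtain ⟨s, f, rfl⟩ := hp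
  obtain ⟨t, g, rfl⟩ := hq
  exact ⟨s + t, Fin.append f g, by simp [Fin.sum_univ_add]⟩

lemma IsSOS.sum {n : ℕ} {ι : Type} (S : Finset ι) (f : ι → MvPolynomial (Fin n) ℝ)
    (h : ∀ i ∈ S, IsSOS (f i)) : IsSOS (∑ i ∈ S, f i) :=
  Finset.sum_induction f IsSOS (fun _ _ => IsSOS.add) ⟨0, Fin.elim0, by simp⟩ h

/-- if pairwise disjoint faces `F₁,…,F_u` of `New(p)` cover `Support(p)`,
then `p` is SOS iff every `pᵢ = Proj(p,Fᵢ)` is SOS. -/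
theorem statement4 {n : ℕ} (p : MvPolynomial (Fin n) ℝ) (u : ℕ)
    (F : Fin u → Set (Fin n → ℝ))
    (hface : ∀ i, IsFace (newton p) (F i))
    (hdisj : ∀ i j, i ≠ j → Disjoint (F i) (F j))
    (hcover : toR '' ↑p.support ⊆ ⋃ i, F i) :
    IsSOS p ↔ ∀ i, IsSOS (projR p (F i)) := by

  have hsupp : ∀ a ∈ p.support, toR a ∈ newton p := fun a ha =>
    subset_convexHull ℝ _ ⟨a, ha, rfl⟩
  constructor
  · intro hp i
    obtain ⟨hsub, hF | ⟨π, h0, hpos⟩⟩ := hface i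
    · have : projR p (F i) = p := by
        ext a
        rw [coeff_projR, hF]
        split_ifs with ha
        · rfl
        · by_contra hne
          exact ha (hsupp a (mem_support_iff.2 (Ne.symm hne)))
      rwa [this]
    · have hw := affine_weight π
      set w : Fin n → ℝ := fun i => π.linear (Pi.single i 1) with hwdef
      have : projR p (F i) = weightedHomogeneousComponent w (2 * (-(π 0) / 2)) p := by
        ext a
        rw [coeff_projR, coeff_weightedHomogeneousComponent]
        by_cases ha : a ∈ p.support
        · refine if_congr ?_ rfl rfl
          constructor
          · intro hT
            have := h0 _ hT
            rw [hw] at this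
            linarith
          · intro he
            by_contra hT
            have := hpos _ ⟨hsupp a ha, hT⟩
            rw [hw] at this
            linarith
        · rw [notMem_support_iff.1 ha, ite_self, ite_self]
      rw [this]
      refine wcomp_sos w p _ hp fun b hb => ?_
      by_cases hT : toR b ∈ F i
      · have := h0 _ hT
        rw [hw] at this
        linarith
      · have := hpos _ ⟨hsupp b hb, hT⟩
        rw [hw] at this
        linarith
  · intro h
    have : p = ∑ i, projR p (F i) := by
      ext a
      rw [coeff_sum]
      simp only [coeff_projR]
      by_cases ha : a ∈ p.support
      · obtain ⟨i, hi⟩ := Set.mem_iUnion.1 (hcover ⟨a, ha, rfl⟩)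
        rw [Finset.sum_eq_single i, if_pos hi]
        · intro j _ hji
          exact if_neg fun hj => Set.disjoint_left.1 (hdisj j i hji) hj hi
        · simp
      · simp [notMem_support_iff.1 ha]
    rw [this]
    exact IsSOS.sum _ _ fun i _ => h i
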